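/- arXiv:1110.4136 — 2 statements merged into one kernel-verified Lean document; each statement's English description precedes it below -/
import Mathlib

section
/- If a binary word w containing at least one 1 is uneven, then for every k ≥ 1, alt(w^k) ≥ k − 1. -/
/-- k-fold concatenation of a word -/
def pw (u : List Bool) (k : ℕ) : List Bool := (List.replicate k u).flatten

/-- a block of `s` zeros -/
def zeros (s : ℕ) : List Bool := List.replicate s false

/-- `w` is an abelian square: `w = s ++ t` with `t` a permutation of `s`
(equivalently over a binary alphabet: equal length and equal number of 1's). -/
def IsAbelianSquare (w : List Bool) : Prop :=
  ∃ s t : List Bool, w = s ++ t ∧ s.length = t.length ∧ s.count true = t.count true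

def w4 : List Bool := [true, false, false, false]
def w3 : List Bool := [true, false, false]
def w2 : List Bool := [true, false]

/-- the word z = (1000)^n (100) (10)^(n!+n) (100) (100)^(2(n!+n)) -/
def Z (n : ℕ) : List Bool :=
  pw w4 n ++ w3 ++ pw w2 (n.factorial + n) ++ w3 ++ pw w3 (2 * (n.factorial + n))

/-- membership in the regular language R = (1000)^* (100) (10)^* (100) (100)^* -/
def InR (w : List Bool) : Prop :=
  ∃ a b c : ℕ, w = pw w4 a ++ w3 ++ pw w2 b ++ w3 ++ pw w3 c

/-- the gap sequence `[s_0, s_1, ..., s_k]` of `w = 0^{s_0} 1 0^{s_1} 1 ⋯ 1 0^{s_k}` -/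
def gaps (w : List Bool) : List ℕ := (w.splitOn true).map List.length

/-- `alt w` = number of indices `1 ≤ i < k` with `s_i ≠ s_{i+1}` -/
def alt (w : List Bool) : ℕ :=
  ((gaps w).tail.zip (gaps w).tail.tail).countP (fun p => decide (p.1 ≠ p.2))

/-- writing `w = 0^{s_1} 1 0^{s_2} 1 ⋯ 0^{s_k} 1 0^{s_{k+1}}` (with k ones),
the cyclic sequence `(s_1 + s_{k+1}, s_2, …, s_k)` -/
def cyclicGaps (w : List Bool) : List ℕ :=
  ((gaps w).headI + (gaps w).getLast!) :: (gaps w).tail.dropLast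

/-- `w` (containing a 1) is uneven: the cyclic gap sequence has length > 1 and
two cyclically adjacent unequal entries (equivalently it is not constant) -/
def Uneven (w : List Bool) : Prop :=
  2 ≤ w.count true ∧ ¬ (cyclicGaps w).Chain' (· = ·)

/-- `w` (containing a 1) is even if it is not uneven -/
def EvenWord (w : List Bool) : Prop := true ∈ w ∧ ¬ Uneven w

theorem gaps_nil : gaps [] = [0] := by simp [gaps]

theorem gaps_true (w : List Bool) : gaps (true :: w) = 0 :: gaps w := by
  simp [gaps, List.splitOn, List.splitOnP_cons_eq_if_modifyHead]

theorem gaps_false (w : List Bool) :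
    gaps (false :: w) = (gaps w).modifyHead (· + 1) := by
  simp only [gaps, List.splitOn, List.splitOnP_cons_eq_if_modifyHead]
  cases h : List.splitOnP (· == true) w <;> simp

theorem gaps_ne_nil (w : List Bool) : gaps w ≠ [] := by
  induction w with
  | nil => simp [gaps_nil]
  | cons c w ih => cases c <;> simp [gaps_true, gaps_false, ih]

theorem gaps_length (w : List Bool) : (gaps w).length = w.count true + 1 := by
  induction w with
  | nil => simp [gaps_nil]
  | cons c w ih => cases c <;> simp [gaps_true, gaps_false, ih]

theorem gaps_append (u v : List Bool) (y : ℕ) (q : List ℕ) (hv : gaps v = y :: q) :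
    ∀ (p : List ℕ) (x : ℕ), gaps u = p ++ [x] → gaps (u ++ v) = p ++ (x + y) :: q := by
  induction u with
  | nil =>
    intro p x h
    rw [gaps_nil] at h
    cases p with
    | nil => simp at h; subst h; simp [hv]
    | cons a p => simp at h
  | cons c u ih =>
    intro p x h
    cases c with
    | true =>
      rw [gaps_true] at h
      cases p with
      | nil => simp [gaps_ne_nil] at h
      | cons a p =>
        simp at h
        rw [List.cons_append, gaps_true, ih p x h.2, ← h.1]; simp
    | false =>
      rw [gaps_false] at h
      rw [List.cons_append, gaps_false]
      obtain ⟨p', x', h'⟩ : ∃ p' x', gaps u = p' ++ [x'] :=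
        ⟨_, _, (List.dropLast_append_getLast (gaps_ne_nil u)).symm⟩
      rw [ih p' x' h']
      rw [h'] at h
      cases p' with
      | nil =>
        cases p with
        | nil => simp at h ⊢; omega
        | cons a p => simp at h
      | cons b p' =>
        cases p with
        | nil => simp at h
        | cons a p =>
          simp only [List.cons_append, List.modifyHead_cons, List.cons.injEq] at h
          obtain ⟨h1, h2⟩ := h
          have := List.append_inj' h2 rfl
          simp at this
          simp [h1, this]

/-- number of adjacent unequal entries -/
def dif (l : List ℕ) : ℕ := (l.zip l.tail).countP (fun p => decide (p.1 ≠ p.2))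

theorem dif_cons_cons (a b : ℕ) (l : List ℕ) :
    dif (a :: b :: l) = dif (b :: l) + if a ≠ b then 1 else 0 := by
  simp [dif, List.countP_cons]

theorem dif_append (x y : List ℕ) : dif x + dif y ≤ dif (x ++ y) := by
  induction x with
  | nil => simp [dif]
  | cons a x ih =>
    cases x with
    | nil =>
      cases y with
      | nil => simp [dif]
      | cons b y =>
        simp only [List.singleton_append, dif_cons_cons]
        simp [dif]
    | cons b x =>
      simp only [List.cons_append, dif_cons_cons] at ih ⊢
      omega

theorem ndif_pos (l : List ℕ) (h : ¬ l.IsChain (· = ·)) : 1 ≤ dif l := by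
  induction l with
  | nil => simp at h
  | cons a l ih =>
    cases l with
    | nil => simp at h
    | cons b l =>
      rw [dif_cons_cons]
      by_cases hab : a = b
      · have := ih (fun hc => h (by simp [hab, hc]))
        omega
      · simp [hab]

theorem dif_rep (l : List ℕ) (h : 1 ≤ dif l) (k : ℕ) :
    k ≤ dif (List.replicate k l).flatten := by
  induction k with
  | zero => simp
  | succ k ih =>
    rw [List.replicate_succ, List.flatten_cons]
    have := dif_append l (List.replicate k l).flatten
    omega

theorem gaps_pw (w : List Bool) (a b : ℕ) (m : List ℕ) (h : gaps w = a :: (m ++ [b])) (k : ℕ) :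
    gaps (pw w (k + 1)) = a :: (m ++ ((List.replicate k ((a + b) :: m)).flatten ++ [b])) := by
  induction k with
  | zero => simp [pw, h]
  | succ k ih =>
    have e : pw w (k + 1 + 1) = w ++ pw w (k + 1) := by
      simp [pw, List.replicate_succ]
    rw [e, gaps_append w _ _ _ ih (a :: m) b (by simp [h])]
    simp [List.replicate_succ, Nat.add_comm]

theorem stmt4 (w : List Bool) (h1 : true ∈ w) (hu : Uneven w)
    (k : ℕ) (hk : 1 ≤ k) : k - 1 ≤ alt (pw w k) := by
  obtain ⟨hc, hn⟩ := hu
  obtain ⟨k, rfl⟩ : ∃ j, k = j + 1 := ⟨k - 1, by omega⟩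
  have hl := gaps_length w
  obtain ⟨a, b, m, h⟩ : ∃ a b m, gaps w = a :: (m ++ [b]) := by
    rcases hg : gaps w with _ | ⟨a, t⟩
    · exact absurd hg (gaps_ne_nil w)
    · have ht : t ≠ [] := by
        rintro rfl
        rw [hg] at hl
        simp at hl
        omega
      exact ⟨a, _, _, by rw [List.dropLast_append_getLast ht]⟩
  have hcy : cyclicGaps w = (a + b) :: m := by
    simp [cyclicGaps, h, List.getLast!_eq_getLast?_getD, List.getLast?_cons]
  rw [hcy] at hn
  have hd := dif_rep _ (ndif_pos _ hn) k
  have e : alt (pw w (k + 1)) =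
      dif (m ++ ((List.replicate k ((a + b) :: m)).flatten ++ [b])) := by
    simp only [alt, dif, gaps_pw w a b m h k, List.tail_cons]
  rw [e]
  have h2 := dif_append m ((List.replicate k ((a + b) :: m)).flatten ++ [b])
  have h3 := dif_append (List.replicate k ((a + b) :: m)).flatten [b]
  omega
end

section
/- The language L of binary words that are not abelian squares is not context-free. -/
open ContextFreeGrammar

/-- Tree-like derivability of a terminal word from a sentential form. -/
inductive DT (g : ContextFreeGrammar Bool) : List (Symbol Bool g.NT) → List Bool → Prop
  | nil : DT g [] []
  | term (a : Bool) (s : List (Symbol Bool g.NT)) (w : List Bool) :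
      DT g s w → DT g (Symbol.terminal a :: s) (a :: w)
  | nont (r : ContextFreeRule Bool g.NT) (s : List (Symbol Bool g.NT)) (w1 w2 : List Bool) :
      r ∈ g.rules → DT g r.output w1 → DT g s w2 →
      DT g (Symbol.nonterminal r.input :: s) (w1 ++ w2)

/-- A terminal word as a sentential form. -/
def tm (g : ContextFreeGrammar Bool) (w : List Bool) : List (Symbol Bool g.NT) :=
  w.map Symbol.terminal

theorem tm_append (g : ContextFreeGrammar Bool) (u v : List Bool) :
    tm g (u ++ v) = tm g u ++ tm g v := by simp [tm]

theorem tm_cons (g : ContextFreeGrammar Bool) (a : Bool) (v : List Bool) :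
    tm g (a :: v) = [Symbol.terminal a] ++ tm g v := by simp [tm]

theorem DT.tm (g : ContextFreeGrammar Bool) (w : List Bool) : DT g (tm g w) w := by
  induction w with
  | nil => exact DT.nil
  | cons a w ih => exact DT.term a _ _ ih

theorem DT.append {g : ContextFreeGrammar Bool} {s t : List (Symbol Bool g.NT)} {v w : List Bool}
    (h : DT g s v) (h' : DT g t w) : DT g (s ++ t) (v ++ w) := by
  induction h with
  | nil => simpa using h'
  | term a s w _ ih => exact DT.term a _ _ ih
  | nont r s w1 w2 hr h1 _ _ ih =>
    rw [List.append_assoc]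
    exact DT.nont r _ _ _ hr h1 ih

theorem DT.split {g : ContextFreeGrammar Bool} (s t : List (Symbol Bool g.NT)) {w : List Bool}
    (h : DT g (s ++ t) w) : ∃ w1 w2, w = w1 ++ w2 ∧ DT g s w1 ∧ DT g t w2 := by
  induction s generalizing w with
  | nil => exact ⟨[], w, rfl, DT.nil, h⟩
  | cons x s ih =>
    rw [List.cons_append] at h
    cases h with
    | term a _ w h =>
      obtain ⟨w1, w2, rfl, h1, h2⟩ := ih h
      exact ⟨a :: w1, w2, rfl, DT.term _ _ _ h1, h2⟩
    | nont r _ v1 v2 hr ho h =>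
      obtain ⟨w1, w2, rfl, h1, h2⟩ := ih h
      exact ⟨v1 ++ w1, w2, by simp, DT.nont r _ _ _ hr ho h1, h2⟩

theorem DT.of_derives {g : ContextFreeGrammar Bool} {s : List (Symbol Bool g.NT)} {w : List Bool}
    (h : g.Derives s (_root_.tm g w)) : DT g s w := by
  induction h using Relation.ReflTransGen.head_induction_on with
  | refl => exact DT.tm g w
  | head h _ ih =>
    obtain ⟨r, hr, hrw⟩ := h
    obtain ⟨p, q, rfl, rfl⟩ := hrw.exists_parts
    obtain ⟨w1, w3, rfl, h1, h3⟩ := DT.split _ _ ih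
    obtain ⟨w1, w2, rfl, h1, h2⟩ := DT.split _ _ h1
    refine (h1.append ?_).append h3
    simpa using DT.nont r [] w2 [] hr h2 DT.nil

theorem DT.derives {g : ContextFreeGrammar Bool} {s : List (Symbol Bool g.NT)} {w : List Bool}
    (h : DT g s w) : g.Derives s (_root_.tm g w) := by
  induction h with
  | nil => exact Derives.refl _
  | term a s w _ ih =>
    have := ih.append_left [Symbol.terminal a]
    rw [tm_cons]
    exact this
  | nont r s w1 w2 hr h1 _ ih1 ih2 =>
    have h0 : g.Produces ([Symbol.nonterminal r.input] ++ s) (r.output ++ s) :=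
      ⟨r, hr, ContextFreeRule.Rewrites.head s⟩
    rw [tm_append]
    exact h0.trans_derives ((ih1.append_right s).trans (ih2.append_left _))

/-- number of marked positions (the positions `< n`) in `[p, p + len)` -/
def marks (n p len : ℕ) : ℕ := min n (p + len) - min n p

theorem descend {g : ContextFreeGrammar Bool} (d n k : ℕ) (hk : 1 ≤ k)
    (hd : ∀ r ∈ g.rules, r.output.length ≤ d) {s : List (Symbol Bool g.NT)} {w : List Bool}
    (h : DT g s w) : ∀ p, s.length * k < marks n p w.length →
    ∃ (B : g.NT) (u z y : List Bool), w = u ++ z ++ y ∧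
      g.Derives s (tm g u ++ [Symbol.nonterminal B] ++ tm g y) ∧
      DT g [Symbol.nonterminal B] z ∧ k < marks n (p + u.length) z.length ∧
      marks n (p + u.length) z.length ≤ d * k := by
  induction h with
  | nil => intro p hp; simp [marks] at hp
  | term a s w hs ih =>
    intro p hp
    have : s.length * k < marks n (p + 1) w.length := by
      simp only [List.length_cons, marks, add_mul] at hp ⊢
      omega
    obtain ⟨B, u, z, y, rfl, h1, h2, h3, h4⟩ := ih _ this
    have e : p + (a :: u).length = p + 1 + u.length := by simp only [List.length_cons]; omega
    refine ⟨B, a :: u, z, y, by simp, ?_, h2, by rw [e]; exact h3, by rw [e]; exact h4⟩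
    have := h1.append_left [Symbol.terminal a]
    rw [tm_cons]
    simpa using this
  | nont r s w1 w2 hr ho hs ih1 ih2 =>
    intro p hp
    have h0 : g.Produces ([Symbol.nonterminal r.input] ++ s) (r.output ++ s) :=
      ⟨r, hr, ContextFreeRule.Rewrites.head s⟩
    by_cases hw1 : k < marks n p w1.length
    · by_cases hw1' : marks n p w1.length ≤ d * k
      · refine ⟨r.input, [], w1, w2, by simp, ?_, ?_, by simpa using hw1, by simpa using hw1'⟩
        · simpa [tm] using hs.derives.append_left [Symbol.nonterminal r.input]
        · simpa using DT.nont r [] w1 [] hr ho DT.nil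
      · have : r.output.length * k < marks n p w1.length := by
          have := Nat.mul_le_mul_right k (hd r hr)
          omega
        obtain ⟨B, u, z, y, rfl, h1, h2, h3, h4⟩ := ih1 _ this
        refine ⟨B, u, z, y ++ w2, by simp, ?_, h2, h3, h4⟩
        have := (h1.append_right s).trans (hs.derives.append_left _)
        rw [tm_append]
        simpa using h0.trans_derives this
    · have : s.length * k < marks n (p + w1.length) w2.length := by
        simp only [List.length_cons, List.length_append, marks, add_mul] at hp hw1 ⊢
        omega
      obtain ⟨B, u, z, y, rfl, h1, h2, h3, h4⟩ := ih2 _ this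
      have e : p + (w1 ++ u).length = p + w1.length + u.length := by
        simp only [List.length_append]; omega
      refine ⟨B, w1 ++ u, z, y, by simp, ?_, h2, by rw [e]; exact h3, by rw [e]; exact h4⟩
      have := ((ho.derives).append_right s).trans (h1.append_left _)
      rw [tm_append]
      simpa using h0.trans_derives this

/-- A node of a parse tree: a nonterminal, left context, own word, right context. -/
structure PNode (N : Type) where
  nt : N
  lc : List Bool
  mid : List Bool
  rc : List Bool

/-- `y` is a descendant of `x` with strictly fewer marked positions. -/
def Anc (g : ContextFreeGrammar Bool) (n : ℕ) (x y : PNode g.NT) : Prop :=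
  (∃ a b, y.lc = x.lc ++ a ∧ y.rc = b ++ x.rc ∧ x.mid = a ++ y.mid ++ b ∧
    g.Derives [Symbol.nonterminal x.nt] (tm g a ++ [Symbol.nonterminal y.nt] ++ tm g b)) ∧
  marks n y.lc.length y.mid.length < marks n x.lc.length x.mid.length ∧
  DT g [Symbol.nonterminal y.nt] y.mid

theorem Derives.ctx {g : ContextFreeGrammar Bool} {s : List (Symbol Bool g.NT)} {A : g.NT}
    {t : List (Symbol Bool g.NT)} {a b : List (Symbol Bool g.NT)}
    (h : g.Derives s (a ++ [Symbol.nonterminal A] ++ b))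
    (h' : g.Derives [Symbol.nonterminal A] t) : g.Derives s (a ++ t ++ b) :=
  h.trans ((h'.append_left a).append_right b)

theorem Anc.trans {g : ContextFreeGrammar Bool} {n : ℕ} {x y z : PNode g.NT}
    (h : Anc g n x y) (h' : Anc g n y z) : Anc g n x z := by
  obtain ⟨⟨a, b, h1, h2, h3, h4⟩, h5, _⟩ := h
  obtain ⟨⟨a', b', h1', h2', h3', h4'⟩, h5', h6'⟩ := h'
  refine ⟨⟨a ++ a', b' ++ b, ?_, ?_, ?_, ?_⟩, h5'.trans h5, h6'⟩
  · simp [h1', h1]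
  · simp [h2', h2]
  · simp [h3', h3]
  · simpa [tm_append] using Derives.ctx h4 h4'

theorem chain {g : ContextFreeGrammar Bool} (d n : ℕ) (hd1 : 1 ≤ d)
    (hd : ∀ r ∈ g.rules, r.output.length ≤ d) (h : ℕ) : ∀ x : PNode g.NT,
    DT g [Symbol.nonterminal x.nt] x.mid → d ^ h < marks n x.lc.length x.mid.length →
    ∃ f : ℕ → PNode g.NT, f 0 = x ∧ ∀ i < h, Anc g n (f i) (f (i + 1)) := by
  induction h with
  | zero => intro x _ _; exact ⟨fun _ => x, rfl, by simp⟩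
  | succ h ih =>
    intro x hx hm
    have hp : 1 ≤ d ^ h := Nat.one_le_pow _ _ hd1
    have hpp : d ^ h ≤ d ^ (h + 1) := Nat.pow_le_pow_right hd1 (by omega)
    obtain ⟨B, u, z, y, e, h1, h2, h3, h4⟩ :=
      descend d n (d ^ h) hp hd hx x.lc.length (by simp only [List.length_singleton]; omega)
    rw [← pow_succ'] at h4
    obtain ⟨f, hf0, hf⟩ := ih ⟨B, x.lc ++ u, z, y ++ x.rc⟩ h2 (by simpa using h3)
    refine ⟨fun i => match i with | 0 => x | i + 1 => f i, rfl, ?_⟩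
    intro i hi
    cases i with
    | zero =>
      show Anc g n x (f 0)
      rw [hf0]
      refine ⟨⟨u, y, rfl, rfl, e, h1⟩, ?_, h2⟩
      simp only [List.length_append]
      omega
    | succ i => exact hf i (by omega)

theorem pw_succ (u : List Bool) (k : ℕ) : pw u (k + 1) = u ++ pw u k := by
  simp [pw, List.replicate_succ]

theorem pw_succ' (u : List Bool) (k : ℕ) : pw u (k + 1) = pw u k ++ u := by
  simp [pw, List.replicate_succ']

theorem pump_derives {g : ContextFreeGrammar Bool} {A : g.NT} {v x : List Bool}
    (h : g.Derives [Symbol.nonterminal A] (tm g v ++ [Symbol.nonterminal A] ++ tm g x)) (i : ℕ) :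
    g.Derives [Symbol.nonterminal A]
      (tm g (pw v i) ++ [Symbol.nonterminal A] ++ tm g (pw x i)) := by
  induction i with
  | zero => simpa [pw, tm] using Derives.refl _
  | succ i ih =>
    have := Derives.ctx ih h
    rw [pw_succ', pw_succ, tm_append, tm_append]
    simpa using this

theorem pumping (g : ContextFreeGrammar Bool) : ∃ n0 : ℕ, ∀ n ≥ n0, ∀ blk : ℕ → Fin 4,
    ∀ W ∈ g.language, n ≤ W.length → ∃ u v m x y : List Bool, W = u ++ v ++ m ++ x ++ y ∧
      blk (u ++ v).length = blk u.length ∧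
      blk (u ++ v ++ m ++ x).length = blk (u ++ v ++ m).length ∧
      marks n (u ++ v).length m.length < marks n u.length (v ++ m ++ x).length ∧
      ∀ i, u ++ pw v i ++ m ++ pw x i ++ y ∈ g.language := by
  classical
  obtain ⟨d, hd1, hd⟩ : ∃ d, 1 ≤ d ∧ ∀ r ∈ g.rules, r.output.length ≤ d :=
    ⟨g.rules.sup (fun r => r.output.length) + 1, by omega, fun r hr =>
      (Finset.le_sup (f := fun r : ContextFreeRule Bool g.NT => r.output.length) hr).trans
        (by omega)⟩
  set L : Finset (g.NT × Fin 4 × Fin 4) :=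
    (g.rules.image (fun r => r.input)) ×ˢ (Finset.univ : Finset (Fin 4 × Fin 4)) with hL
  set h := L.card + 1 with hh
  refine ⟨d ^ h + 1, ?_⟩
  intro n hn blk W hW hlen
  have hD : DT g [Symbol.nonterminal g.initial] W := DT.of_derives hW
  obtain ⟨f, hf0, hf⟩ := chain d n hd1 hd h ⟨g.initial, [], W, []⟩ hD (by
    simp only [marks, List.length_nil]; omega)
  have hanc : ∀ i k, i + k + 1 ≤ h → Anc g n (f i) (f (i + k + 1)) := by
    intro i k
    induction k with
    | zero => intro hi; exact hf i (by omega)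
    | succ k ih => intro hi; exact (ih (by omega)).trans (hf _ (by omega))
  have hlt : ∀ i j, i < j → j ≤ h → Anc g n (f i) (f j) := by
    intro i j hij hj
    obtain ⟨k, rfl⟩ : ∃ k, j = i + k + 1 := ⟨j - i - 1, by omega⟩
    exact hanc i k hj
  let lab : ℕ → g.NT × Fin 4 × Fin 4 := fun i =>
    ((f i).nt, blk (f i).lc.length, blk ((f i).lc ++ (f i).mid).length)
  have hmaps : ∀ i ∈ Finset.Icc 1 h, lab i ∈ L := by
    intro i hi
    rw [Finset.mem_Icc] at hi
    have hdt := (hlt 0 i (by omega) hi.2).2.2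
    simp only [hL, lab, Finset.mem_product, Finset.mem_univ, and_true]
    generalize (f i).nt = A at hdt
    generalize (f i).mid = w at hdt
    cases hdt with
    | nont r _ w1 w2 hr _ _ => exact Finset.mem_image_of_mem _ hr
  obtain ⟨i, hi, j, hj, hij, hlab⟩ := Finset.exists_ne_map_eq_of_card_lt_of_maps_to
    (s := Finset.Icc 1 h) (t := L) (by simp [hh]) hmaps
  rw [Finset.mem_Icc] at hi hj
  wlog hlt' : i < j generalizing i j
  · exact this j hj i hi hij.symm hlab.symm (by omega)
  obtain ⟨⟨a0, b0, h1, h2, h3, h4⟩, -, -⟩ := hlt 0 i (by omega) hi.2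
  obtain ⟨⟨a, b, k1, k2, k3, k4⟩, k5, k6⟩ := hlt i j hlt' hj.2
  rw [hf0] at h1 h2 h3 h4
  simp only [List.nil_append, List.append_nil] at h1 h2 h3 h4
  simp only [lab, Prod.mk.injEq] at hlab
  obtain ⟨e1, e2, e3⟩ := hlab
  rw [← e1] at k4 k6
  refine ⟨a0, a, (f j).mid, b, b0, ?_, ?_, ?_, ?_, ?_⟩
  · rw [h3, k3]; simp
  · rw [← h1, ← k1, e2]
  · rw [← h1, ← k1, ← e3, k3, k1]; simp
  · rw [← h1, ← k1, ← k3]; exact k5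
  · intro i
    have h5 := Derives.ctx h4 ((pump_derives k4 i).trans
      ((k6.derives.append_left (tm g (pw a i))).append_right (tm g (pw b i))))
    show g.Derives _ (tm g _)
    simpa [tm_append] using h5

/-- Alternating word of length `m` beginning with `s`. -/
def altw (s : Bool) : ℕ → List Bool
  | 0 => []
  | m + 1 => s :: altw (!s) m

theorem altw_length (s : Bool) (m : ℕ) : (altw s m).length = m := by
  induction m generalizing s with
  | zero => rfl
  | succ m ih => simp [altw, ih]

theorem altw_add (s : Bool) (m k : ℕ) :
    altw s (m + k) = altw s m ++ altw (s ^^ decide (m % 2 = 1)) k := by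
  induction m generalizing s with
  | zero => simp [altw]
  | succ m ih =>
    rw [show m + 1 + k = (m + k) + 1 by omega, altw, altw, ih, List.cons_append]
    have : ((!s) ^^ decide (m % 2 = 1)) = (s ^^ decide ((m + 1) % 2 = 1)) := by
      rcases Nat.mod_two_eq_zero_or_one m with h | h
      · have h' : (m + 1) % 2 = 1 := by omega
        simp [h, h']
      · have h' : (m + 1) % 2 = 0 := by omega
        simp [h, h']
    rw [this]

theorem altw_add_even (s : Bool) (m k : ℕ) :
    altw s (2 * m + k) = altw s (2 * m) ++ altw s k := by
  rw [altw_add]; simp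

theorem altw_count (s : Bool) (m : ℕ) : (altw s (2 * m)).count true = m := by
  induction m with
  | zero => rfl
  | succ m ih =>
    rw [show 2 * (m + 1) = 2 * m + 1 + 1 by omega]
    cases s <;> simp [altw, ih]

theorem pw_length (u : List Bool) (i : ℕ) : (pw u i).length = i * u.length := by
  simp [pw]

theorem pw_altw (s : Bool) (m i : ℕ) : pw (altw s (2 * m)) i = altw s (2 * (m * i)) := by
  induction i with
  | zero => rfl
  | succ i ih =>
    rw [pw_succ, ih, show 2 * (m * (i + 1)) = 2 * m + 2 * (m * i) by ring, altw_add_even]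

theorem split_le {u y A R : List Bool} (h : u ++ y = A ++ R) (hl : u.length ≤ A.length) :
    ∃ y', A = u ++ y' ∧ y = y' ++ R := by
  obtain ⟨y', rfl⟩ := List.prefix_of_prefix_length_le (List.prefix_append u y)
    (h ▸ List.prefix_append A R) hl
  refine ⟨y', rfl, ?_⟩
  rw [List.append_assoc] at h
  exact List.append_cancel_left h

theorem altw_split {s : Bool} {u y : List Bool} {M : ℕ} (h : u ++ y = altw s M) :
    u = altw s u.length ∧ y = altw (s ^^ decide (u.length % 2 = 1)) y.length := by
  have hM : M = u.length + y.length := by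
    rw [← altw_length s M, ← h, List.length_append]
  rw [hM, altw_add] at h
  exact List.append_inj h (by simp [altw_length])

theorem altw_pump {s : Bool} {u v y : List Bool} {M k : ℕ} (h : u ++ v ++ y = altw s M)
    (hk : v.length = 2 * k) (i : ℕ) : u ++ pw v (i + 1) ++ y = altw s (M + 2 * (k * i)) := by
  have hM : M = u.length + (2 * k + y.length) := by
    rw [← altw_length s M, ← h]; simp [hk, add_assoc]
  rw [List.append_assoc] at h
  obtain ⟨hu, hvy⟩ := altw_split h
  obtain ⟨hv, hy⟩ := altw_split hvy
  rw [hk] at hv hy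
  simp only [Nat.mul_mod_right, zero_ne_one, decide_false, Bool.xor_false] at hy
  rw [show M + 2 * (k * i) = u.length + (2 * (k * (i + 1)) + y.length) by rw [hM]; ring,
    altw_add, altw_add_even, ← pw_altw, ← hv, ← hu, ← hy, List.append_assoc]

theorem repl_pump {c : Bool} {u v y : List Bool} {M : ℕ} (h : u ++ v ++ y = List.replicate M c)
    (i : ℕ) : u ++ pw v (i + 1) ++ y = List.replicate (M + v.length * i) c := by
  rw [List.eq_replicate_iff] at h ⊢
  obtain ⟨h1, h2⟩ := h
  constructor
  · simp only [List.length_append, pw_length] at h1 ⊢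
    rw [← h1]; ring
  · intro b hb
    apply h2
    simp only [pw, List.mem_append, List.mem_flatten, List.mem_replicate] at hb ⊢
    rcases hb with (hb | ⟨l, ⟨-, rfl⟩, hb⟩) | hb <;> tauto

/-- The test words `0^a 1^b (01)^c`. -/
def FW (a b c : ℕ) : List Bool :=
  List.replicate a false ++ List.replicate b true ++ altw false (2 * c)

theorem FW_sq1 (M e : ℕ) : IsAbelianSquare (FW M (M + 2 * e) M) := by
  refine ⟨List.replicate M false ++ List.replicate (M + e) true,
    List.replicate e true ++ altw false (2 * M), ?_, ?_, ?_⟩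
  · rw [FW, show M + 2 * e = (M + e) + e by omega, ← List.replicate_append_replicate]
    simp only [List.append_assoc]
  · simp [altw_length]; omega
  · simp [altw_count, List.count_replicate]; omega

theorem FW_sq2 (M e : ℕ) : IsAbelianSquare (FW M M (M + 2 * e)) := by
  refine ⟨List.replicate M false ++ List.replicate M true ++ altw false (2 * e),
    altw false (2 * (M + e)), ?_, ?_, ?_⟩
  · rw [FW, show 2 * (M + 2 * e) = 2 * e + 2 * (M + e) by ring, altw_add_even]
    simp
  · simp [altw_length]; omega
  · simp [altw_count, List.count_replicate]

theorem FW_not_sq (n q : ℕ) (hq : 2 ≤ q) :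
    ¬ IsAbelianSquare (FW n (n + 2 * q) (n + 2 * q)) := by
  rintro ⟨s, t, h, hl, hc⟩
  have hlen := congrArg List.length h
  have hcnt := congrArg (List.count true) h
  simp only [FW, List.length_append, List.length_replicate, altw_length, List.count_append,
    altw_count, List.count_replicate] at hlen hcnt
  simp at hcnt
  rw [FW, show 2 * (n + 2 * q) = 2 * 1 + 2 * (n + 2 * q - 1) by omega, altw_add_even,
    ← List.append_assoc] at h
  obtain ⟨y, rfl, -⟩ := split_le h (by simp [altw_length]; omega)
  simp only [List.count_append, altw_count, List.count_replicate] at hcnt hc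
  simp at hcnt hc
  omega

/-- Block label of a position. -/
def blk (n b p : ℕ) : Fin 4 :=
  if p ≤ n then 0 else if p ≤ n + b then 1 else if p % 2 = 0 then 2 else 3

theorem blk_eq {n b p q : ℕ} (h : blk n b q = blk n b p) :
    (p ≤ n ∧ q ≤ n) ∨ (n < p ∧ n < q ∧ p ≤ n + b ∧ q ≤ n + b) ∨
      (n + b < p ∧ n + b < q ∧ p % 2 = q % 2) := by
  unfold blk at h
  split_ifs at h <;> omega

theorem not_cf_aux (g : ContextFreeGrammar Bool)
    (hg : ∀ w, w ∈ g.language ↔ ¬ IsAbelianSquare w) : False := by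
  obtain ⟨n0, hp⟩ := pumping g
  obtain ⟨n, hn0, hn2⟩ : ∃ n, n ≥ n0 ∧ 2 ≤ n := ⟨n0 + 2, by omega, by omega⟩
  set q := n.factorial with hq
  have hq2 : 2 ≤ q := hn2.trans (Nat.self_le_factorial n)
  set b := n + 2 * q with hb
  have hW : FW n b b ∈ g.language := (hg _).2 (FW_not_sq n q hq2)
  obtain ⟨u, v, m, x, y, hdec, b1, b2, hm, hpump⟩ := hp n hn0 (blk n b) _ hW (by simp [FW])
  have key : ∀ i, IsAbelianSquare (u ++ pw v (i + 1) ++ m ++ pw x (i + 1) ++ y) → False :=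
    fun i h => (hg _).1 (hpump (i + 1)) h
  have hfac : ∀ t, 1 ≤ t → t ≤ n → ∃ j, t * j = q := fun t h1 h2 => by
    obtain ⟨j, hj⟩ := Nat.dvd_factorial h1 h2
    exact ⟨j, hj.symm⟩
  have c1 := blk_eq b1
  have c2 := blk_eq b2
  simp only [marks, List.length_append] at c1 c2 hm
  rw [FW] at hdec
  have hdec' : (u ++ v) ++ (m ++ x ++ y) =
      List.replicate n false ++ (List.replicate b true ++ altw false (2 * b)) := by
    rw [← List.append_assoc (List.replicate n false), hdec]; simp
  have huv : u.length + v.length ≤ n := by omega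
  rcases c2 with c2 | c2 | c2
  · -- everything in the first block
    have hd : (u ++ v ++ m ++ x) ++ y =
      List.replicate n false ++ (List.replicate b true ++ altw false (2 * b)) := by
      rw [← hdec']; simp
    obtain ⟨y', e1, rfl⟩ := split_le hd (by simp; omega)
    obtain ⟨j, hj⟩ := hfac (v.length + x.length) (by omega) (by omega)
    apply key (2 * j)
    have r1 := repl_pump (u := u) (v := v) (y := m ++ x ++ y') (by rw [e1]; simp) (2 * j)
    have r2 := repl_pump (u := u ++ pw v (2 * j + 1) ++ m) (v := x) (y := y')
      (by rw [← r1]; simp) (2 * j)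
    have e : n + v.length * (2 * j) + x.length * (2 * j) = b := by
      rw [hb, ← hj]; ring
    rw [← List.append_assoc, r2, e, ← List.append_assoc]
    exact FW_sq1 b 0
  · obtain ⟨m', e1, e2⟩ := split_le hdec' (by simp; omega)
    obtain ⟨j, hj⟩ := hfac v.length (by omega) (by omega)
    obtain ⟨m2, rfl, e3⟩ : ∃ m2, m = m' ++ m2 ∧
        m2 ++ x ++ y = List.replicate b true ++ altw false (2 * b) := by
      have hl := congrArg List.length e1
      simp at hl
      obtain ⟨m2, h1, h2⟩ := split_le (u := m') (A := m) (R := x ++ y)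
        (by rw [← e2]; simp) (by omega)
      exact ⟨m2, h1, by rw [h2]; simp⟩
    have hl := congrArg List.length e1
    simp at hl c2
    obtain ⟨y', e4, rfl⟩ := split_le e3 (by simp; omega)
    have r1 := repl_pump (u := u) (v := v) (y := m') e1.symm (2 * j)
    have r2 := repl_pump (u := m2) (v := x) (y := y') e4.symm (2 * j)
    apply key (2 * j)
    have e : u ++ pw v (2 * j + 1) ++ (m' ++ m2) ++ pw x (2 * j + 1) ++ (y' ++ altw false (2 * b))
        = (u ++ pw v (2 * j + 1) ++ m') ++ (m2 ++ pw x (2 * j + 1) ++ y') ++ altw false (2 * b) := by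
      simp
    rw [e, r1, r2, show n + v.length * (2 * j) = b by rw [hb, ← hj]; ring,
      show b + x.length * (2 * j) = b + 2 * (x.length * j) by ring]
    exact FW_sq1 b _
  · obtain ⟨m', e1, e2⟩ := split_le hdec' (by simp; omega)
    obtain ⟨j, hj⟩ := hfac v.length (by omega) (by omega)
    have hl := congrArg List.length e1
    simp at hl
    obtain ⟨m2, rfl, e3⟩ : ∃ m2, m = m' ++ m2 ∧
        m2 ++ (x ++ y) = List.replicate b true ++ altw false (2 * b) := by
      obtain ⟨m2, h1, h2⟩ := split_le (u := m') (A := m) (R := x ++ y)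
        (by rw [← e2]; simp) (by omega)
      exact ⟨m2, h1, h2.symm⟩
    simp at c2
    obtain ⟨m3, rfl, e4⟩ := split_le e3.symm (by simp; omega)
    have r1 := repl_pump (u := u) (v := v) (y := m') e1.symm (2 * j)
    have r2 := altw_pump (u := m3) (v := x) (y := y) (k := x.length / 2)
      (by rw [e4]; simp) (by omega) (2 * j)
    apply key (2 * j)
    have e : u ++ pw v (2 * j + 1) ++ (m' ++ (List.replicate b true ++ m3)) ++
        pw x (2 * j + 1) ++ y
        = (u ++ pw v (2 * j + 1) ++ m') ++ List.replicate b true ++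
          (m3 ++ pw x (2 * j + 1) ++ y) := by
      simp
    rw [e, r1, r2, show n + v.length * (2 * j) = b by rw [hb, ← hj]; ring,
      show 2 * b + 2 * (x.length / 2 * (2 * j)) = 2 * (b + 2 * (x.length / 2 * j)) by ring]
    exact FW_sq2 b _

theorem stmt10 : ¬ Language.IsContextFree {w : List Bool | ¬ IsAbelianSquare w} := by
  rintro ⟨g, hg⟩
  exact not_cf_aux g (fun w => by rw [hg]; rfl)
end
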